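/- arXiv:2212.07198 — 2 statements merged into one kernel-verified Lean document; each statement's English description precedes it below -/
import Mathlib

section
/- Let p be a prime number and let D = p or D = 2p, with D not a perfect square. If T_D = 2L for some positive integer L, then Q_L = 2. -/
/-- The sequence of complete quotients of the continued fraction of `x`:
`α₀ = x`, `α_{k+1} = 1/(αₖ - ⌊αₖ⌋)`. -/
noncomputable def cfAlpha (x : ℝ) : ℕ → ℝ
  | 0 => x
  | k + 1 => 1 / (cfAlpha x k - (⌊cfAlpha x k⌋ : ℝ))

/-- The partial quotients of the continued fraction of `x`: `aₖ = ⌊αₖ⌋`. -/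
noncomputable def cfA (x : ℝ) (k : ℕ) : ℤ :=
  ⌊cfAlpha x k⌋

/-- The length of the minimal period of the continued fraction of `x`:
the least `l > 0` with `a_{k+l} = a_k` for all `k ≥ 1`. -/
noncomputable def cfPeriod (x : ℝ) : ℕ :=
  sInf {l : ℕ | 0 < l ∧ ∀ k : ℕ, 1 ≤ k → cfA x (k + l) = cfA x k}

/-- The integer sequences `(Pₖ, Qₖ)` attached to the continued fraction of `√D`:
`P₀ = 0`, `Q₀ = 1`, `P_{k+1} = aₖ·Qₖ − Pₖ`, `Q_{k+1} = (D − P_{k+1}²)/Qₖ`. -/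
noncomputable def cfPQ (D : ℕ) : ℕ → ℤ × ℤ
  | 0 => (0, 1)
  | k + 1 =>
    ((cfA (Real.sqrt D) k) * (cfPQ D k).2 - (cfPQ D k).1,
      ((D : ℤ) - ((cfA (Real.sqrt D) k) * (cfPQ D k).2 - (cfPQ D k).1) ^ 2) / (cfPQ D k).2)

lemma cf_unique (x y : ℕ → ℝ) (a : ℕ → ℤ) (hx : ∀ i, 1 < x i) (hy : ∀ i, 1 < y i)
    (hxa : ∀ i, x i = a i + 1 / x (i + 1)) (hya : ∀ i, y i = a i + 1 / y (i + 1)) :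
    x 0 = y 0 := by
  have ha : ∀ i, (1 : ℝ) ≤ a i := by
    intro i
    have h1 : 1 / x (i + 1) < 1 := by
      rw [div_lt_one (by linarith [hx (i + 1)])]; exact hx _
    have h2 : (0 : ℝ) < a i := by linarith [hx i, hxa i]
    exact_mod_cast h2
  have hbase : ∀ i, |x i - y i| ≤ 1 := by
    intro i
    have h1 : 1 / x (i + 1) < 1 := by
      rw [div_lt_one (by linarith [hx (i + 1)])]; exact hx _
    have h2 : 1 / y (i + 1) < 1 := by
      rw [div_lt_one (by linarith [hy (i + 1)])]; exact hy _
    have h3 : 0 < 1 / x (i + 1) := by have := hx (i + 1); positivity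
    have h4 : 0 < 1 / y (i + 1) := by have := hy (i + 1); positivity
    rw [abs_le]
    constructor <;> linarith [hxa i, hya i]
  have hone : ∀ i, |x i - y i| * (x (i + 1) * y (i + 1)) = |x (i + 1) - y (i + 1)| := by
    intro i
    have h3 : 0 < x (i + 1) := by linarith [hx (i + 1)]
    have h4 : 0 < y (i + 1) := by linarith [hy (i + 1)]
    rw [← abs_of_pos (mul_pos h3 h4), ← abs_mul, abs_sub_comm (x (i + 1))]
    congr 1
    rw [hxa i, hya i]
    field_simp
    ring
  have htwo : ∀ z : ℕ → ℝ, (∀ i, 1 < z i) → (∀ i, z i = a i + 1 / z (i + 1)) →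
      ∀ i, 2 ≤ z i * z (i + 1) := by
    intro z hz hza i
    have h3 : 0 < z (i + 1) := by linarith [hz (i + 1)]
    have : z i * z (i + 1) = a i * z (i + 1) + 1 := by
      rw [hza i]; field_simp
    rw [this]
    nlinarith [ha i, hz (i + 1)]
  have hstep : ∀ i, |x i - y i| ≤ |x (i + 2) - y (i + 2)| / 4 := by
    intro i
    have e1 := hone i
    have e2 := hone (i + 1)
    have t1 := htwo x hx hxa (i + 1)
    have t2 := htwo y hy hya (i + 1)
    have h5 : (4 : ℝ) ≤ (x (i + 1) * x (i + 1 + 1)) * (y (i + 1) * y (i + 1 + 1)) := by nlinarith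
    have h6 : |x (i + 2) - y (i + 2)| =
        |x i - y i| * ((x (i + 1) * x (i + 1 + 1)) * (y (i + 1) * y (i + 1 + 1))) := by
      change |x (i + 1 + 1) - y (i + 1 + 1)| = _
      rw [← e2, ← e1]; ring
    have h7 := mul_le_mul_of_nonneg_left h5 (abs_nonneg (x i - y i))
    linarith
  have hall : ∀ n : ℕ, ∀ i, |x i - y i| ≤ (1 / 4 : ℝ) ^ n := by
    intro n
    induction n with
    | zero => intro i; simpa using hbase i
    | succ n ih =>
      intro i
      have := hstep i
      have := ih (i + 2)
      rw [pow_succ]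
      linarith
  have hlim := tendsto_pow_atTop_nhds_zero_of_lt_one (r := (1 / 4 : ℝ)) (by norm_num) (by norm_num)
  have h0 : |x 0 - y 0| ≤ 0 := ge_of_tendsto' hlim (fun n => hall n 0)
  have := abs_nonpos_iff.mp h0
  linarith

/-- Invariants at index `k`. -/
def CfInv (D k : ℕ) : Prop :=
  0 < (cfPQ D k).2 ∧ (cfPQ D k).2 ∣ (D : ℤ) - (cfPQ D k).1 ^ 2 ∧
  cfAlpha (Real.sqrt D) k = (Real.sqrt D + (cfPQ D k).1) / (cfPQ D k).2 ∧
  ((cfPQ D k).1 : ℝ) < Real.sqrt D ∧ 1 < cfAlpha (Real.sqrt D) k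

/-- Consequences linking index `k` and `k + 1`. -/
def CfNext (D k : ℕ) : Prop :=
  (cfPQ D k).2 * (cfPQ D (k + 1)).2 = (D : ℤ) - (cfPQ D (k + 1)).1 ^ 2 ∧
  (cfPQ D (k + 1)).1 = cfA (Real.sqrt D) k * (cfPQ D k).2 - (cfPQ D k).1 ∧
  Real.sqrt D - (cfPQ D k).2 < (cfPQ D (k + 1)).1 ∧
  Real.sqrt D - (cfPQ D (k + 1)).2 < (cfPQ D (k + 1)).1 ∧
  0 < (cfPQ D (k + 1)).1

lemma cf_irr (D : ℕ) (hns : ¬ IsSquare D) : Irrational (Real.sqrt D) :=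
  irrational_sqrt_natCast_iff.mpr hns

lemma cf_step (D k : ℕ) (hns : ¬ IsSquare D) (h : CfInv D k) :
    CfInv D (k + 1) ∧ CfNext D k := by
  obtain ⟨hQ, hdvd, hα, hP, h1⟩ := h
  have hirr := cf_irr D hns
  have hs2 : Real.sqrt D * Real.sqrt D = D := Real.mul_self_sqrt (by positivity)
  have hs0 : 0 ≤ Real.sqrt D := Real.sqrt_nonneg _
  have eP : (cfPQ D (k + 1)).1 = cfA (Real.sqrt D) k * (cfPQ D k).2 - (cfPQ D k).1 := rfl
  have eQ : (cfPQ D (k + 1)).2 = ((D : ℤ) - (cfPQ D (k + 1)).1 ^ 2) / (cfPQ D k).2 := rfl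
  have eα : cfAlpha (Real.sqrt D) (k + 1) =
    1 / (cfAlpha (Real.sqrt D) k - (cfA (Real.sqrt D) k : ℝ)) := rfl
  have f1 : (cfA (Real.sqrt D) k : ℝ) ≤ cfAlpha (Real.sqrt D) k := Int.floor_le _
  have f2 : cfAlpha (Real.sqrt D) k < (cfA (Real.sqrt D) k : ℝ) + 1 := Int.lt_floor_add_one _
  have ha : 1 ≤ cfA (Real.sqrt D) k := by
    apply Int.le_floor.mpr; push_cast; exact h1.le
  unfold CfInv CfNext
  generalize cfAlpha (Real.sqrt D) (k + 1) = α' at *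
  generalize cfAlpha (Real.sqrt D) k = α at *
  generalize cfA (Real.sqrt D) k = a at *
  generalize (cfPQ D (k + 1)).1 = P' at *
  generalize (cfPQ D (k + 1)).2 = Q' at *
  generalize (cfPQ D k).1 = P at *
  generalize (cfPQ D k).2 = Q at *
  generalize hs : Real.sqrt D = s at *
  have hQr : (0 : ℝ) < Q := by exact_mod_cast hQ
  have har : (1 : ℝ) ≤ a := by exact_mod_cast ha
  have ePr : (P' : ℝ) = a * Q - P := by rw [eP]; push_cast; ring
  have hdvd' : Q ∣ (D : ℤ) - P' ^ 2 := by
    have : (D : ℤ) - P' ^ 2 = (D - P ^ 2) + Q * (2 * a * P - a ^ 2 * Q) := by rw [eP]; ring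
    rw [this]
    exact dvd_add hdvd (dvd_mul_right _ _)
  have hQQ : Q * Q' = (D : ℤ) - P' ^ 2 := by rw [eQ]; exact Int.mul_ediv_cancel' hdvd'
  have hQQr : (Q : ℝ) * Q' = (s - P') * (s + P') := by
    have : (Q : ℝ) * Q' = (D : ℝ) - P' ^ 2 := by exact_mod_cast hQQ
    rw [this, ← hs2]; ring
  have hαQ : α * Q = s + P := by rw [hα]; field_simp
  have hne : (P' : ℝ) ≠ s := fun h => hirr ⟨P', by push_cast; exact h⟩
  have hfr : (α - a) * Q = s - P' := by rw [ePr, sub_mul, hαQ]; ring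
  have hP's : (P' : ℝ) < s := by
    apply lt_of_le_of_ne _ hne
    nlinarith
  have hfpos : 0 < α - a := by
    by_contra hc
    nlinarith
  have hlow : s - Q < P' := by nlinarith
  have hup : (Q : ℝ) < s + P' := by rw [ePr]; nlinarith
  have hQ'r : (0 : ℝ) < Q' := by
    have : (0 : ℝ) < Q * Q' := by rw [hQQr]; apply mul_pos <;> linarith
    exact (pos_iff_pos_of_mul_pos this).mp hQr
  have hQ' : 0 < Q' := by exact_mod_cast hQ'r
  have hred : s - Q' < P' := by
    by_contra hc
    push Not at hc
    nlinarith
  have hP'r : (0 : ℝ) < P' := by linarith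
  refine ⟨⟨hQ', ⟨Q, by rw [← hQQ]; ring⟩, ?_, hP's, ?_⟩, hQQ, eP, hlow, hred,
    by exact_mod_cast hP'r⟩
  · rw [eα, div_eq_div_iff hfpos.ne' hQ'r.ne']
    have : (Q : ℝ) * (1 * Q') = Q * ((s + P') * (α - a)) := by
      rw [one_mul, hQQr, ← hfr]; ring
    exact mul_left_cancel₀ hQr.ne' this
  · rw [eα, lt_div_iff₀ hfpos]; linarith

lemma cf_inv (D : ℕ) (hns : ¬ IsSquare D) (k : ℕ) : CfInv D k := by
  induction k with
  | zero =>
    have hD : 1 < D := by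
      rcases D with _ | _ | D
      · exact absurd ⟨0, rfl⟩ hns
      · exact absurd ⟨1, rfl⟩ hns
      · omega
    have : 1 < Real.sqrt D := by
      rw [Real.lt_sqrt (by norm_num)]
      simpa using hD
    refine ⟨by simp [cfPQ], by simp [cfPQ], by simp [cfPQ, cfAlpha], ?_, ?_⟩
    · simp only [cfPQ]; push_cast; linarith
    · simpa [cfAlpha] using this
  | succ k ih => exact (cf_step D k hns ih).1

lemma cf_alpha_eq (D : ℕ) (hns : ¬ IsSquare D) (k : ℕ) :
    cfAlpha (Real.sqrt D) k = cfA (Real.sqrt D) k + 1 / cfAlpha (Real.sqrt D) (k + 1) := by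
  have eα : cfAlpha (Real.sqrt D) (k + 1) =
    1 / (cfAlpha (Real.sqrt D) k - (cfA (Real.sqrt D) k : ℝ)) := rfl
  rw [eα, one_div_one_div]; ring

/-- Integers in the same half-open window `(s - Q, s)`, congruent mod `Q`, are equal. -/
lemma window_unique (s : ℝ) (Q x y : ℤ) (hx : (x : ℝ) < s) (hx' : s - Q < x)
    (hy : (y : ℝ) < s) (hy' : s - Q < y) (h : Q ∣ x - y) : x = y := by
  have h1 : x - y < Q := by
    have : (x : ℝ) - y < Q := by linarith
    exact_mod_cast this
  have h2 : y - x < Q := by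
    have : (y : ℝ) - x < Q := by linarith
    exact_mod_cast this
  have := Int.eq_zero_of_abs_lt_dvd h (abs_lt.mpr ⟨by linarith, h1⟩)
  linarith

theorem stmt_4 (p D : ℕ) (hp : p.Prime) (hD : D = p ∨ D = 2 * p)
    (hns : ¬ IsSquare D) (L : ℕ) (hL : 0 < L)
    (hT : cfPeriod (Real.sqrt D) = 2 * L) :
    (cfPQ D L).2 = 2 := by
  have inv := cf_inv D hns
  have nxt : ∀ k, CfNext D k := fun k => (cf_step D k hns (inv k)).2
  have hirr := cf_irr D hns
  have hs2 : Real.sqrt D * Real.sqrt D = D := Real.mul_self_sqrt (by positivity)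
  have hmem : 2 * L ∈ {l : ℕ | 0 < l ∧ ∀ k : ℕ, 1 ≤ k →
      cfA (Real.sqrt D) (k + l) = cfA (Real.sqrt D) k} := by
    rw [← hT]
    apply Nat.sInf_mem
    by_contra hc
    rw [Set.not_nonempty_iff_eq_empty] at hc
    unfold cfPeriod at hT
    rw [hc, Nat.sInf_empty] at hT
    omega
  obtain ⟨-, hper⟩ := hmem
  -- the complete quotients are periodic
  have hα : cfAlpha (Real.sqrt D) 1 = cfAlpha (Real.sqrt D) (2 * L + 1) := by
    apply cf_unique (fun i => cfAlpha (Real.sqrt D) (i + 1))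
      (fun i => cfAlpha (Real.sqrt D) (i + (2 * L + 1))) (fun i => cfA (Real.sqrt D) (i + 1))
      |> fun h => ?_
    · have := h (fun i => (inv _).2.2.2.2) (fun i => (inv _).2.2.2.2)
        (fun i => cf_alpha_eq D hns _) (fun i => by
          have e := cf_alpha_eq D hns (i + (2 * L + 1))
          have e2 := hper (i + 1) (by omega)
          rw [show i + 1 + 2 * L = i + (2 * L + 1) by ring] at e2
          rw [e2] at e
          rw [show i + 1 + (2 * L + 1) = i + (2 * L + 1) + 1 by ring]
          exact e)
      simpa using this
  have hQ1 : (cfPQ D 1).2 = (cfPQ D (2 * L + 1)).2 ∧ (cfPQ D 1).1 = (cfPQ D (2 * L + 1)).1 := by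
    have i1 := inv 1
    have i2 := inv (2 * L + 1)
    have e := hα
    rw [i1.2.2.1, i2.2.2.1] at e
    have p1 := i1.1
    have p2 := i2.1
    generalize (cfPQ D 1).2 = Q at *
    generalize (cfPQ D 1).1 = P at *
    generalize (cfPQ D (2 * L + 1)).2 = Q' at *
    generalize (cfPQ D (2 * L + 1)).1 = P' at *
    have p1r : (0 : ℝ) < Q := by exact_mod_cast p1
    have p2r : (0 : ℝ) < Q' := by exact_mod_cast p2
    rw [div_eq_div_iff p1r.ne' p2r.ne'] at e
    have hQ : Q = Q' := by
      by_contra hc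
      have hc' : ((Q' : ℝ) - Q) ≠ 0 := by
        intro h
        apply hc
        have : (Q' : ℝ) = Q := by linarith
        exact_mod_cast this.symm
      apply hirr
      refine ⟨((P' * Q - P * Q' : ℤ) : ℚ) / ((Q' - Q : ℤ) : ℚ), ?_⟩
      push_cast
      rw [div_eq_iff hc']
      linarith
    refine ⟨hQ, ?_⟩
    rw [hQ] at e
    have := mul_right_cancel₀ p2r.ne' e
    have : (P : ℝ) = P' := by linarith
    exact_mod_cast this
  have hQ0 : (cfPQ D 0).2 = 1 := rfl
  have hQ2L : (cfPQ D (2 * L)).2 = 1 := by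
    have n0 := (nxt 0).1
    have n1 := (nxt (2 * L)).1
    have p1 := (inv (2 * L + 1)).1
    rw [hQ0] at n0
    simp only [zero_add] at n0
    rw [hQ1.1, hQ1.2, ← n1] at n0
    exact (mul_right_cancel₀ p1.ne' n0).symm
  have hsym : ∀ j, j + 1 ≤ 2 * L → (cfPQ D j).2 = (cfPQ D (2 * L - j)).2 ∧
      (cfPQ D (j + 1)).1 = (cfPQ D (2 * L - j)).1 := by
    intro j
    induction j with
    | zero =>
      intro _
      refine ⟨by rw [hQ0]; exact hQ2L.symm, ?_⟩
      obtain ⟨m, hm⟩ : ∃ m, 2 * L = m + 1 := ⟨2 * L - 1, by omega⟩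
      have a1 := (nxt 0).2.2.1
      have a2 := (inv 1).2.2.2.1
      have b1 := (nxt m).2.2.2.1
      rw [← hm, hQ2L] at b1
      have b2 := (inv (2 * L)).2.2.2.1
      rw [hQ0] at a1
      exact window_unique (Real.sqrt D) 1 _ _ a2 a1 b2 b1 (one_dvd _)
    | succ j ih =>
      intro hj
      obtain ⟨ih1, ih2⟩ := ih (by omega)
      obtain ⟨m, hm⟩ : ∃ m, 2 * L - j = m + 1 + 1 := ⟨2 * L - j - 2, by omega⟩
      have hm' : 2 * L - (j + 1) = m + 1 := by omega
      rw [hm] at ih1 ih2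
      rw [hm']
      have n1 := (nxt j).1
      have n2 := (nxt (m + 1)).1
      have hQ : (cfPQ D (j + 1)).2 = (cfPQ D (m + 1)).2 := by
        rw [ih1, ih2, ← n2, mul_comm] at n1
        exact mul_right_cancel₀ (inv (m + 1 + 1)).1.ne' n1
      refine ⟨hQ, ?_⟩
      apply window_unique (Real.sqrt D) (cfPQ D (m + 1)).2 _ _ (inv _).2.2.2.1 _
        (inv _).2.2.2.1 (nxt m).2.2.2.1
      · have e1 := (nxt (j + 1)).2.1
        have e2 := (nxt (m + 1)).2.1
        rw [e1, hQ, ih2, e2]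
        exact ⟨cfA (Real.sqrt D) (j + 1) - cfA (Real.sqrt D) (m + 1), by ring⟩
      · rw [← hQ]; exact (nxt (j + 1)).2.2.1
  have hPL : (cfPQ D (L + 1)).1 = (cfPQ D L).1 := by
    have := (hsym L (by omega)).2
    rwa [show 2 * L - L = L by omega] at this
  have hne1 : (cfPQ D L).2 ≠ 1 := by
    intro h1
    have hP : (cfPQ D (L + 1)).1 = (cfPQ D 1).1 := by
      have a1 := (nxt 0).2.2.1
      have b1 := (nxt L).2.2.1
      rw [hQ0] at a1
      rw [h1] at b1
      exact window_unique (Real.sqrt D) 1 _ _ (inv _).2.2.2.1 b1 (inv _).2.2.2.1 a1 (one_dvd _)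
    have hQ : (cfPQ D (L + 1)).2 = (cfPQ D 1).2 := by
      have a1 := (nxt 0).1
      have b1 := (nxt L).1
      rw [hQ0] at a1
      rw [h1, hP] at b1
      simp only [zero_add] at a1
      linarith
    have hαL : cfAlpha (Real.sqrt D) (L + 1) = cfAlpha (Real.sqrt D) 1 := by
      rw [(inv _).2.2.1, (inv 1).2.2.1, hP, hQ]
    have hall : ∀ k, cfAlpha (Real.sqrt D) (k + 1 + L) = cfAlpha (Real.sqrt D) (k + 1) := by
      intro k
      induction k with
      | zero => rw [show 0 + 1 + L = L + 1 by ring]; exact hαL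
      | succ k ih =>
        rw [show k + 1 + 1 + L = (k + 1 + L) + 1 by ring]
        change 1 / (cfAlpha (Real.sqrt D) (k + 1 + L) - (⌊cfAlpha (Real.sqrt D) (k + 1 + L)⌋ : ℝ)) =
          1 / (cfAlpha (Real.sqrt D) (k + 1) - (⌊cfAlpha (Real.sqrt D) (k + 1)⌋ : ℝ))
        rw [ih]
    have hle : cfPeriod (Real.sqrt D) ≤ L := by
      apply Nat.sInf_le
      refine ⟨hL, fun k hk => ?_⟩
      obtain ⟨m, rfl⟩ : ∃ m, k = m + 1 := ⟨k - 1, by omega⟩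
      unfold cfA
      rw [hall]
    omega
  -- arithmetic
  obtain ⟨m, hm⟩ : ∃ m, L = m + 1 := ⟨L - 1, by omega⟩
  have hQpos := (inv L).1
  have hdvd := (inv L).2.1
  have hPs := (inv L).2.2.2.1
  have hPpos : 0 < (cfPQ D L).1 := by rw [hm]; exact (nxt m).2.2.2.2
  have hQ2P : (cfPQ D L).2 ∣ 2 * (cfPQ D L).1 := by
    have := (nxt L).2.1
    rw [hPL] at this
    exact ⟨cfA (Real.sqrt D) L, by linarith⟩
  have hPD : (cfPQ D L).1 ^ 2 < (D : ℤ) := by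
    have h0 : (0 : ℝ) < (cfPQ D L).1 := by exact_mod_cast hPpos
    have : ((cfPQ D L).1 : ℝ) ^ 2 < D := by nlinarith
    exact_mod_cast this
  clear hsym hPL hα
  generalize (cfPQ D L).1 = P at *
  generalize (cfPQ D L).2 = Q at *
  have hQ2D : Q ∣ 2 * (D : ℤ) := by
    have : 2 * (D : ℤ) = 2 * (D - P ^ 2) + (2 * P) * P := by ring
    rw [this]
    exact dvd_add (Dvd.dvd.mul_left hdvd _) (Dvd.dvd.mul_right hQ2P _)
  have hD2p : (D : ℤ) ∣ 2 * p := by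
    rcases hD with rfl | rfl
    · exact dvd_mul_left _ _
    · push_cast; exact dvd_rfl
  have hDle : (D : ℤ) ≤ 2 * p := Int.le_of_dvd (by have := hp.pos; positivity) hD2p
  have hQ4p : Q ∣ 4 * (p : ℤ) := by
    refine hQ2D.trans ?_
    have := mul_dvd_mul_left 2 hD2p
    rwa [← mul_assoc] at this
  have hp2 : (2 : ℤ) ≤ p := by exact_mod_cast hp.two_le
  have hpI : Prime (p : ℤ) := Nat.prime_iff_prime_int.mp hp
  by_cases h2 : p = 2
  · subst h2
    have hD2 : D = 2 := by
      rcases hD with h | h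
      · exact h
      · exact absurd ⟨2, by omega⟩ hns
    subst hD2
    have : P = 1 := by
      have : P < 2 := by by_contra hc; push_cast at hPD; nlinarith
      omega
    subst this
    have := Int.le_of_dvd (by norm_num) hQ2P
    interval_cases Q <;> simp_all
  have hodd : p % 2 = 1 := (hp.eq_two_or_odd).resolve_left h2
  have hpQ : ¬ (p : ℤ) ∣ Q := by
    intro h
    have h3 := hpI.dvd_or_dvd (h.trans hQ2P)
    rcases h3 with h3 | h3
    · have := Int.le_of_dvd (by norm_num) h3
      omega
    · have := Int.le_of_dvd hPpos h3
      nlinarith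
  have hcop : IsCoprime Q (p : ℤ) := ((Prime.coprime_iff_not_dvd hpI).mpr hpQ).symm
  have hQ4 : Q ∣ 4 := hcop.dvd_of_dvd_mul_right hQ4p
  have hQle := Int.le_of_dvd (by norm_num) hQ4
  have hcases : Q = 2 ∨ Q = 4 := by
    interval_cases Q <;> first | omega | simp_all
  rcases hcases with h | h
  · exact h
  · exfalso
    subst h
    rcases hD with h | h
    · subst h; omega
    · have hPe : Even P := by rw [Int.even_iff]; omega
      obtain ⟨t, rfl⟩ := hPe
      obtain ⟨c, hc⟩ := hdvd
      have : (D : ℤ) = 4 * (c + t * t) := by linear_combination hc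
      generalize c + t * t = u at this
      omega
end

section
/- Let p be a prime number and let D = p or D = 2p, with D not a perfect square. If T_D = 2L for some positive integer L, then Q_L = 2, P_L = a_L, a_L is an element of {⌊√D⌋ − 1, ⌊√D⌋}, and a_L ≡ D (mod 2). -/
/-- Invariants of the continued fraction algorithm for `√D`. -/
lemma cf_inv_s7 (D : ℕ) (hirr : Irrational (Real.sqrt D)) (hD : 1 ≤ D) (k : ℕ) :
    0 < (cfPQ D k).2 ∧ (cfPQ D k).2 ∣ (D : ℤ) - (cfPQ D k).1 ^ 2 ∧
    cfAlpha (Real.sqrt D) k * (cfPQ D k).2 = Real.sqrt D + (cfPQ D k).1 ∧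
    ((cfPQ D k).1 : ℝ) < Real.sqrt D ∧ 1 ≤ cfA (Real.sqrt D) k := by
  induction k with
  | zero =>
    have h1 : (1:ℝ) ≤ Real.sqrt D := by
      rw [Real.one_le_sqrt]; exact_mod_cast hD
    refine ⟨by simp [cfPQ], by simp [cfPQ], by simp [cfPQ, cfAlpha], ?_, ?_⟩
    · simp only [cfPQ]; push_cast; linarith
    · simp only [cfA, cfAlpha]
      exact Int.le_floor.mpr (by exact_mod_cast h1)
  | succ k ih =>
    obtain ⟨hQ, hdvd, hal, hPs, ha⟩ := ih
    have e1 : (cfPQ D (k+1)).1 = cfA (Real.sqrt D) k * (cfPQ D k).2 - (cfPQ D k).1 := rfl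
    have e2 : (cfPQ D (k+1)).2 = ((D:ℤ) - (cfPQ D (k+1)).1 ^ 2) / (cfPQ D k).2 := rfl
    have e3 : cfAlpha (Real.sqrt D) (k+1) =
      1 / (cfAlpha (Real.sqrt D) k - (cfA (Real.sqrt D) k : ℝ)) := rfl
    have hfl : (cfA (Real.sqrt D) k : ℝ) ≤ cfAlpha (Real.sqrt D) k := Int.floor_le _
    have hfl2 : cfAlpha (Real.sqrt D) k < (cfA (Real.sqrt D) k : ℝ) + 1 := Int.lt_floor_add_one _
    have hss : Real.sqrt D * Real.sqrt D = D := Real.mul_self_sqrt (by positivity)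
    have hdvd' : (cfPQ D k).2 ∣ (D : ℤ) - (cfPQ D (k+1)).1 ^ 2 := by
      have : (D : ℤ) - (cfPQ D (k+1)).1 ^ 2 = ((D:ℤ) - (cfPQ D k).1 ^ 2) +
        (cfPQ D k).2 * (cfA (Real.sqrt D) k * (2 * (cfPQ D k).1 -
          cfA (Real.sqrt D) k * (cfPQ D k).2)) := by rw [e1]; ring
      rw [this]
      exact dvd_add hdvd (dvd_mul_right _ _)
    have hmul : (cfPQ D (k+1)).2 * (cfPQ D k).2 = (D:ℤ) - (cfPQ D (k+1)).1 ^ 2 := by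
      rw [e2]; exact Int.ediv_mul_cancel hdvd'
    have hne : Real.sqrt D ≠ ((cfPQ D (k+1)).1 : ℝ) := hirr.ne_int _
    have e1r : ((cfPQ D (k+1)).1 : ℝ) = cfA (Real.sqrt D) k * (cfPQ D k).2 - (cfPQ D k).1 := by
      rw [e1]; push_cast; ring
    have hmulr : ((cfPQ D (k+1)).2 : ℝ) * (cfPQ D k).2 = (D:ℝ) - ((cfPQ D (k+1)).1:ℝ) ^ 2 := by
      exact_mod_cast hmul
    clear e1 e2
    generalize (cfPQ D (k+1)).1 = P' at *
    generalize (cfPQ D (k+1)).2 = Q' at *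
    generalize (cfPQ D k).1 = P at *
    generalize (cfPQ D k).2 = Q at *
    have hA' : cfA (Real.sqrt D) (k+1) = ⌊cfAlpha (Real.sqrt D) (k+1)⌋ := rfl
    rw [hA']
    generalize cfAlpha (Real.sqrt D) (k+1) = al' at *
    generalize cfAlpha (Real.sqrt D) k = al at *
    generalize cfA (Real.sqrt D) k = a at *
    generalize Real.sqrt D = s at *
    have hQr : (0:ℝ) < Q := by exact_mod_cast hQ
    have har : (1:ℝ) ≤ a := by exact_mod_cast ha
    have hsP : s - P' = (al - a) * Q := by rw [e1r]; linarith
    have h0 : (P':ℝ) < s := by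
      have : 0 ≤ (al - a) * Q := by apply mul_nonneg <;> linarith
      rcases lt_or_eq_of_le (show (P':ℝ) ≤ s by linarith) with h | h
      · exact h
      · exact absurd h.symm hne
    have halpos : 0 < al - a := by
      by_contra hcon
      have : (al - a) * Q ≤ 0 := mul_nonpos_of_nonpos_of_nonneg (by linarith) hQr.le
      linarith
    have hplus : 0 < s + P' := by
      have : (Q:ℝ) ≤ a * Q := by nlinarith
      linarith
    have hfac : (Q':ℝ) * Q = (s - P') * (s + P') := by rw [hmulr]; linarith
    have hQ' : (0:ℝ) < Q' := by
      have : 0 < (Q':ℝ) * Q := by rw [hfac]; apply mul_pos <;> linarith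
      exact pos_of_mul_pos_left this hQr.le
    refine ⟨by exact_mod_cast hQ', ⟨Q, by rw [← hmul]⟩, ?_, h0, ?_⟩
    · rw [e3, div_mul_eq_mul_div, div_eq_iff halpos.ne', one_mul]
      apply mul_right_cancel₀ hQr.ne'
      rw [hfac, hsP]; ring
    · apply Int.le_floor.mpr
      rw [e3, le_div_iff₀ halpos]; push_cast; linarith

lemma cf_step_s7 (D : ℕ) (hirr : Irrational (Real.sqrt D)) (hD : 1 ≤ D) (k : ℕ) :
    (cfPQ D (k+1)).1 + (cfPQ D k).1 = cfA (Real.sqrt D) k * (cfPQ D k).2 ∧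
    (cfPQ D (k+1)).2 * (cfPQ D k).2 = (D:ℤ) - (cfPQ D (k+1)).1 ^ 2 ∧
    Real.sqrt D - (cfPQ D k).2 < (cfPQ D (k+1)).1 ∧
    Real.sqrt D - (cfPQ D (k+1)).2 < (cfPQ D (k+1)).1 := by
  obtain ⟨hQ, hdvd, hal, hPs, ha⟩ := cf_inv_s7 D hirr hD k
  obtain ⟨hQ', hdvd', hal', hPs', ha'⟩ := cf_inv_s7 D hirr hD (k+1)
  have e1 : (cfPQ D (k+1)).1 = cfA (Real.sqrt D) k * (cfPQ D k).2 - (cfPQ D k).1 := rfl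
  have e2 : (cfPQ D (k+1)).2 = ((D:ℤ) - (cfPQ D (k+1)).1 ^ 2) / (cfPQ D k).2 := rfl
  have hfl2 : cfAlpha (Real.sqrt D) k < (cfA (Real.sqrt D) k : ℝ) + 1 := Int.lt_floor_add_one _
  have hss : Real.sqrt D * Real.sqrt D = D := Real.mul_self_sqrt (by positivity)
  have hd : (cfPQ D k).2 ∣ (D : ℤ) - (cfPQ D (k+1)).1 ^ 2 := by
    have : (D : ℤ) - (cfPQ D (k+1)).1 ^ 2 = ((D:ℤ) - (cfPQ D k).1 ^ 2) +
      (cfPQ D k).2 * (cfA (Real.sqrt D) k * (2 * (cfPQ D k).1 -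
        cfA (Real.sqrt D) k * (cfPQ D k).2)) := by rw [e1]; ring
    rw [this]
    exact dvd_add hdvd (dvd_mul_right _ _)
  have hmul : (cfPQ D (k+1)).2 * (cfPQ D k).2 = (D:ℤ) - (cfPQ D (k+1)).1 ^ 2 := by
    rw [e2]; exact Int.ediv_mul_cancel hd
  have e1r : ((cfPQ D (k+1)).1 : ℝ) = cfA (Real.sqrt D) k * (cfPQ D k).2 - (cfPQ D k).1 := by
    rw [e1]; push_cast; ring
  have hmulr : ((cfPQ D (k+1)).2 : ℝ) * (cfPQ D k).2 = (D:ℝ) - ((cfPQ D (k+1)).1:ℝ) ^ 2 := by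
    exact_mod_cast hmul
  refine ⟨by rw [e1]; ring, hmul, ?_⟩
  clear e1 e2 hal'
  generalize (cfPQ D (k+1)).1 = P' at *
  generalize (cfPQ D (k+1)).2 = Q' at *
  generalize (cfPQ D k).1 = P at *
  generalize (cfPQ D k).2 = Q at *
  generalize cfAlpha (Real.sqrt D) k = al at *
  generalize cfA (Real.sqrt D) k = a at *
  generalize Real.sqrt D = s at *
  have hQr : (0:ℝ) < Q := by exact_mod_cast hQ
  have har : (1:ℝ) ≤ a := by exact_mod_cast ha
  constructor
  · have : al * Q < (a + 1) * Q := mul_lt_mul_of_pos_right hfl2 hQr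
    rw [e1r]; linarith
  · have h1 : (Q:ℝ) < s + P' := by
      have : (Q:ℝ) ≤ a * Q := by nlinarith
      linarith
    have hfac : (Q':ℝ) * Q = (s - P') * (s + P') := by rw [hmulr]; linarith
    have : (s - P') * Q < Q' * Q := by
      rw [hfac]; exact mul_lt_mul_of_pos_left h1 (by linarith)
    have := lt_of_mul_lt_mul_right this hQr.le
    linarith

lemma cf_alpha_congr (x : ℝ) {i j : ℕ} (h : cfAlpha x i = cfAlpha x j) (n : ℕ) :
    cfAlpha x (i + n) = cfAlpha x (j + n) := by
  induction n with
  | zero => exact h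
  | succ n ih =>
    rw [← add_assoc, ← add_assoc]
    simp only [cfAlpha, ih]

/-- Recursion in the form `α = a + 1/α'`. -/
lemma cf_alpha_rec (D : ℕ) (hirr : Irrational (Real.sqrt D)) (hD : 1 ≤ D) (k : ℕ) :
    1 ≤ cfAlpha (Real.sqrt D) k ∧
    (cfAlpha (Real.sqrt D) k - cfA (Real.sqrt D) k) * cfAlpha (Real.sqrt D) (k+1) = 1 := by
  have h := (cf_inv_s7 D hirr hD k).2.2.2.2
  have h' := (cf_inv_s7 D hirr hD (k+1)).2.2.2.2
  have g : ∀ k, (cfA (Real.sqrt D) k : ℝ) ≤ cfAlpha (Real.sqrt D) k := fun k => Int.floor_le _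
  have e3 : cfAlpha (Real.sqrt D) (k+1) =
      1 / (cfAlpha (Real.sqrt D) k - (cfA (Real.sqrt D) k : ℝ)) := rfl
  have hr : (1:ℝ) ≤ cfA (Real.sqrt D) k := by exact_mod_cast h
  have hr' : (1:ℝ) ≤ cfA (Real.sqrt D) (k+1) := by exact_mod_cast h'
  refine ⟨hr.trans (g k), ?_⟩
  have := hr'.trans (g (k+1))
  rw [e3]
  apply mul_one_div_cancel
  intro h0
  rw [e3, h0] at this
  norm_num at this

lemma cf_contract (D : ℕ) (hirr : Irrational (Real.sqrt D)) (hD : 1 ≤ D) (i j : ℕ)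
    (h : ∀ n, cfA (Real.sqrt D) (i + n) = cfA (Real.sqrt D) (j + n)) (m : ℕ) :
    ∀ n, |cfAlpha (Real.sqrt D) (i + n) - cfAlpha (Real.sqrt D) (j + n)| ≤ (1/4)^m := by
  induction m with
  | zero =>
    intro n
    have a1 : (cfA (Real.sqrt D) (i+n) : ℝ) ≤ cfAlpha (Real.sqrt D) (i+n) := Int.floor_le _
    have a2 : cfAlpha (Real.sqrt D) (i+n) < (cfA (Real.sqrt D) (i+n) : ℝ) + 1 :=
      Int.lt_floor_add_one _
    have b1 : (cfA (Real.sqrt D) (j+n) : ℝ) ≤ cfAlpha (Real.sqrt D) (j+n) := Int.floor_le _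
    have b2 : cfAlpha (Real.sqrt D) (j+n) < (cfA (Real.sqrt D) (j+n) : ℝ) + 1 :=
      Int.lt_floor_add_one _
    rw [h n] at a1 a2
    rw [pow_zero, abs_le]; constructor <;> linarith
  | succ m ih =>
    intro n
    have ih2 := ih (n+2)
    obtain ⟨_, x1⟩ := cf_alpha_rec D hirr hD (i+n)
    obtain ⟨x2, x3⟩ := cf_alpha_rec D hirr hD (i+n+1)
    obtain ⟨x4, _⟩ := cf_alpha_rec D hirr hD (i+n+1+1)
    obtain ⟨_, y1⟩ := cf_alpha_rec D hirr hD (j+n)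
    obtain ⟨y2, y3⟩ := cf_alpha_rec D hirr hD (j+n+1)
    obtain ⟨y4, _⟩ := cf_alpha_rec D hirr hD (j+n+1+1)
    have hb := (cf_inv_s7 D hirr hD (j+n+1)).2.2.2.2
    have hbr : (1:ℝ) ≤ cfA (Real.sqrt D) (j+n+1) := by exact_mod_cast hb
    have h1 := h n
    have h2 : cfA (Real.sqrt D) (i+n+1) = cfA (Real.sqrt D) (j+n+1) := h (n+1)
    rw [h1] at x1
    rw [h2] at x3
    change |cfAlpha (Real.sqrt D) (i + n+1+1) - cfAlpha (Real.sqrt D) (j + n+1+1)| ≤ (1/4)^m at ih2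
    generalize cfAlpha (Real.sqrt D) (i + n+1+1) = u2 at *
    generalize cfAlpha (Real.sqrt D) (j + n+1+1) = v2 at *
    generalize cfAlpha (Real.sqrt D) (i + n+1) = u1 at *
    generalize cfAlpha (Real.sqrt D) (j + n+1) = v1 at *
    generalize cfAlpha (Real.sqrt D) (i + n) = u0 at *
    generalize cfAlpha (Real.sqrt D) (j + n) = v0 at *
    generalize (cfA (Real.sqrt D) (j + n+1) : ℝ) = b at *
    generalize (cfA (Real.sqrt D) (j + n) : ℝ) = a at *
    have hu : 2 ≤ u1 * u2 := by nlinarith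
    have hv : 2 ≤ v1 * v2 := by nlinarith
    have key : (u0 - v0) * ((u1*u2)*(v1*v2)) = u2 - v2 := by
      have k1 : (u0 - v0) * (u1 * v1) = v1 - u1 := by linear_combination v1 * x1 - u1 * y1
      have k2 : (u1 - v1) * (u2 * v2) = v2 - u2 := by linear_combination v2 * x3 - u2 * y3
      linear_combination u2 * v2 * k1 - k2
    have h4 : 4 ≤ (u1*u2)*(v1*v2) := by nlinarith
    have : |u0 - v0| * 4 ≤ |u2 - v2| := by
      rw [← key, abs_mul, abs_of_nonneg (show 0 ≤ (u1*u2)*(v1*v2) by linarith)]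
      exact mul_le_mul_of_nonneg_left h4 (abs_nonneg _)
    rw [pow_succ]; linarith

lemma cf_unique_s7 (D : ℕ) (hirr : Irrational (Real.sqrt D)) (hD : 1 ≤ D) (i j : ℕ)
    (h : ∀ n, cfA (Real.sqrt D) (i + n) = cfA (Real.sqrt D) (j + n)) :
    cfAlpha (Real.sqrt D) i = cfAlpha (Real.sqrt D) j := by
  by_contra hne
  have hpos : 0 < |cfAlpha (Real.sqrt D) i - cfAlpha (Real.sqrt D) j| :=
    abs_pos.mpr (sub_ne_zero.mpr hne)
  obtain ⟨m, hm⟩ := exists_pow_lt_of_lt_one hpos (show (1/4:ℝ) < 1 by norm_num)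
  have := cf_contract D hirr hD i j h m 0
  simp only [add_zero] at this
  linarith

lemma irr_pair (s : ℝ) (hs : Irrational s) (x y : ℤ) (h : s * x = y) : x = 0 := by
  by_contra hx
  have hxr : (x:ℝ) ≠ 0 := by exact_mod_cast hx
  apply hs
  refine ⟨(y:ℚ)/x, ?_⟩
  push_cast
  rw [← h]; field_simp

lemma cf_PQ_of_alpha (D : ℕ) (hirr : Irrational (Real.sqrt D)) (hD : 1 ≤ D) (i j : ℕ)
    (h : cfAlpha (Real.sqrt D) i = cfAlpha (Real.sqrt D) j) : cfPQ D i = cfPQ D j := by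
  obtain ⟨hQ, _, hal, _, _⟩ := cf_inv_s7 D hirr hD i
  obtain ⟨hQ', _, hal', _, _⟩ := cf_inv_s7 D hirr hD j
  rw [h] at hal
  have h2 : (cfPQ D j).2 - (cfPQ D i).2 = 0 := by
    apply irr_pair _ hirr _ ((cfPQ D i).2 * (cfPQ D j).1 - (cfPQ D j).2 * (cfPQ D i).1)
    push_cast
    linear_combination (cfPQ D i).2 * hal' - (cfPQ D j).2 * hal
  have h3 : (cfPQ D i).2 = (cfPQ D j).2 := by linarith
  rw [h3] at hal
  have h4 : ((cfPQ D i).1 : ℝ) = (cfPQ D j).1 := by linarith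
  exact Prod.ext (by exact_mod_cast h4) h3

/-- The final arithmetic argument. -/
lemma final_arith (p D : ℕ) (hp : p.Prime) (hD : D = p ∨ D = 2 * p) (hns : ¬ IsSquare D)
    (a P Q : ℤ) (ha : 1 ≤ a) (hQ : 1 < Q) (hP : P ^ 2 < D) (haQ : a * Q = 2 * P)
    (hd : Q ∣ (D:ℤ) - P ^ 2) : Q = 2 := by
  have hPpos : 0 < P := by nlinarith
  have key : ∀ R : ℤ, 0 < R → R ∣ P → R ∣ (D:ℤ) → R = 1 ∨ (R = 2 ∧ D = 2 * p) := by
    intro R hR h1 h2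
    have hle : R ≤ P := Int.le_of_dvd hPpos h1
    have hlt : R ^ 2 < D := by nlinarith
    lift R to ℕ using hR.le
    have h2' : R ∣ D := by exact_mod_cast h2
    have hlt' : R ^ 2 < D := by exact_mod_cast hlt
    have hp2 := hp.two_le
    have cR : R ∣ p → R = 1 ∨ R = p := fun h => (Nat.dvd_prime hp).mp h
    rcases hD with rfl | rfl
    · rcases cR h2' with h | h
      · left; exact_mod_cast h
      · subst h; nlinarith
    · rcases (Nat.dvd_mul.mp h2') with ⟨u, v, hu, hv, huv⟩
      rcases (Nat.dvd_prime Nat.prime_two).mp hu with rfl | rfl <;>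
        rcases (Nat.dvd_prime hp).mp hv with rfl | rfl
      · left; simp [← huv]
      · subst huv; nlinarith
      · right; simp [← huv]
      · subst huv; nlinarith
  rcases Int.even_or_odd Q with ⟨R, hR⟩ | hodd
  · have hRpos : 0 < R := by omega
    have hPR : P = a * R := by
      have : 2 * P = 2 * (a * R) := by rw [← haQ, hR]; ring
      linarith
    have hRP : R ∣ P := ⟨a, by rw [hPR]; ring⟩
    have hRQ : R ∣ Q := ⟨2, by omega⟩
    have hRD : R ∣ (D:ℤ) := by
      have := dvd_add (hRQ.trans hd) (dvd_pow hRP two_ne_zero)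
      simpa using this
    rcases key R hRpos hRP hRD with h | ⟨h, hD2⟩
    · omega
    · exfalso
      subst h
      have h4 : (4:ℤ) ∣ (D:ℤ) := by
        have h1 : (4:ℤ) ∣ (D:ℤ) - P^2 := by rw [hR] at hd; exact hd
        have h2 : (4:ℤ) ∣ P^2 := ⟨a^2, by rw [hPR]; ring⟩
        simpa using dvd_add h1 h2
      have h5 : 2 ∣ p := by omega
      have := (Nat.prime_dvd_prime_iff_eq Nat.prime_two hp).mp h5
      apply hns
      exact ⟨2, by omega⟩
  · exfalso
    have hc : IsCoprime Q 2 := Int.isCoprime_two_right.mpr hodd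
    have hQP : Q ∣ P := hc.dvd_of_dvd_mul_left ⟨a, by rw [← haQ]; ring⟩
    have hQD : Q ∣ (D:ℤ) := by
      have := dvd_add hd (dvd_pow hQP two_ne_zero)
      simpa using this
    rcases key Q (by omega) hQP hQD with h | ⟨h, _⟩
    · omega
    · subst h; revert hodd; decide

theorem stmt_7 (p D : ℕ) (hp : p.Prime) (hD : D = p ∨ D = 2 * p)
    (hns : ¬ IsSquare D) (L : ℕ) (hL : 0 < L)
    (hT : cfPeriod (Real.sqrt D) = 2 * L) :
    (cfPQ D L).2 = 2 ∧ (cfPQ D L).1 = cfA (Real.sqrt D) L ∧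
      (cfA (Real.sqrt D) L = ⌊Real.sqrt D⌋ - 1 ∨ cfA (Real.sqrt D) L = ⌊Real.sqrt D⌋) ∧
      cfA (Real.sqrt D) L ≡ (D : ℤ) [ZMOD 2] := by
  have hp2 := hp.two_le
  have hD1 : 1 ≤ D := by omega
  have hirr : Irrational (Real.sqrt D) := irrational_sqrt_natCast_iff.mpr hns
  set S : Set ℕ := {l : ℕ | 0 < l ∧ ∀ k : ℕ, 1 ≤ k →
    cfA (Real.sqrt D) (k + l) = cfA (Real.sqrt D) k} with hS
  have hTS : sInf S = 2 * L := hT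
  have hne : S.Nonempty := by
    by_contra hcon
    rw [Set.not_nonempty_iff_eq_empty] at hcon
    rw [hcon, Nat.sInf_empty] at hTS
    omega
  have hmem : 2 * L ∈ S := hTS ▸ Nat.sInf_mem hne
  have hmin : ∀ l ∈ S, 2 * L ≤ l := fun l hl => hTS ▸ Nat.sInf_le hl
  have hal : cfAlpha (Real.sqrt D) (2 * L + 1) = cfAlpha (Real.sqrt D) 1 := by
    apply cf_unique_s7 D hirr hD1
    intro n
    have := hmem.2 (1 + n) (by omega)
    rw [← this]; congr 1; omega
  have hPQ1 := cf_PQ_of_alpha D hirr hD1 _ _ hal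
  have hQpos : ∀ k, 0 < (cfPQ D k).2 := fun k => (cf_inv_s7 D hirr hD1 k).1
  have hlt : ∀ k, ((cfPQ D k).1 : ℝ) < Real.sqrt D := fun k => (cf_inv_s7 D hirr hD1 k).2.2.2.1
  have hst := cf_step_s7 D hirr hD1
  -- `Q = 1` determines `P`
  have hQ2L : (cfPQ D (2 * L)).2 = 1 := by
    have h1 := (hst (2 * L)).2.1
    have h0 := (hst 0).2.1
    rw [hPQ1] at h1
    have h00 : (cfPQ D 0).2 = 1 := rfl
    rw [h00] at h0
    exact mul_left_cancel₀ (hQpos 1).ne' (by rw [h1]; exact h0.symm)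
  have hP1 : ∀ k, 1 ≤ k → (cfPQ D k).2 = 1 → (cfPQ D k).1 = (cfPQ D 1).1 := by
    intro k hk hk1
    obtain ⟨m, rfl⟩ : ∃ m, k = m + 1 := ⟨k - 1, by omega⟩
    have h1 := (hst m).2.2.2
    have h2 := hlt (m+1)
    have h3 := (hst 0).2.2.1
    have h4 := hlt 1
    have h00 : (cfPQ D 0).2 = 1 := rfl
    rw [hk1] at h1
    rw [h00] at h3
    simp only [zero_add] at h3
    push_cast at h1 h3
    have i1 : ((cfPQ D (m+1)).1 : ℝ) < ((cfPQ D 1).1 + 1 : ℤ) := by push_cast; linarith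
    have i2 : ((cfPQ D 1).1 : ℝ) < ((cfPQ D (m+1)).1 + 1 : ℤ) := by push_cast; linarith
    have i1' := Int.cast_lt.mp i1
    have i2' := Int.cast_lt.mp i2
    omega
  have hsym : ∀ k, k < 2 * L → (cfPQ D (2 * L - k)).1 = (cfPQ D (k + 1)).1 ∧
      (cfPQ D (2 * L - k)).2 = (cfPQ D k).2 := by
    intro k
    induction k with
    | zero =>
      intro _
      refine ⟨?_, ?_⟩
      · simpa using hP1 (2 * L) (by omega) hQ2L
      · exact hQ2L
    | succ k ih =>
      intro hk
      obtain ⟨ih1, ih2⟩ := ih (by omega)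
      obtain ⟨m, hm⟩ : ∃ m, 2 * L - k = m + 1 + 1 := ⟨2 * L - k - 2, by omega⟩
      have hm' : 2 * L - (k + 1) = m + 1 := by omega
      rw [hm] at ih1 ih2
      rw [hm']
      have hQe : (cfPQ D (m+1)).2 = (cfPQ D (k+1)).2 := by
        have h1 := (hst (m+1)).2.1
        have h2 := (hst k).2.1
        rw [ih1, ih2] at h1
        exact mul_left_cancel₀ (hQpos k).ne' (by rw [h1, ← h2]; ring)
      refine ⟨?_, hQe⟩
      have s1 := (hst (m+1)).1
      have s2 := (hst (k+1)).1
      rw [ih1, hQe] at s1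
      have b1 := (hst m).2.2.2
      have b2 := hlt (m+1)
      have b3 := (hst (k+1)).2.2.1
      have b4 := hlt (k+1+1)
      rw [hQe] at b1
      have hq := hQpos (k+1)
      have i1 : ((cfPQ D (m+1)).1 : ℝ) < ((cfPQ D (k+1+1)).1 + (cfPQ D (k+1)).2 : ℤ) := by
        push_cast; linarith
      have i2 : ((cfPQ D (k+1+1)).1 : ℝ) < ((cfPQ D (m+1)).1 + (cfPQ D (k+1)).2 : ℤ) := by
        push_cast; linarith
      have i1' := Int.cast_lt.mp i1
      have i2' := Int.cast_lt.mp i2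
      have hdv : (cfPQ D (k+1)).2 ∣ (cfPQ D (m+1)).1 - (cfPQ D (k+1+1)).1 :=
        ⟨cfA (Real.sqrt D) (m+1) - cfA (Real.sqrt D) (k+1), by linear_combination s1 - s2⟩
      have := Int.eq_zero_of_abs_lt_dvd hdv (by rw [abs_lt]; constructor <;> linarith)
      linarith
  have hmid : (cfPQ D L).1 = (cfPQ D (L+1)).1 := by
    have := (hsym L (by omega)).1
    rwa [show 2 * L - L = L by omega] at this
  have haQ : cfA (Real.sqrt D) L * (cfPQ D L).2 = 2 * (cfPQ D L).1 := by
    have := (hst L).1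
    rw [← hmid] at this
    linarith
  obtain ⟨hQL, hdL, _, hPL, haL⟩ := cf_inv_s7 D hirr hD1 L
  have hQne : (cfPQ D L).2 ≠ 1 := by
    intro h1
    have hPe : (cfPQ D L).1 = (cfPQ D (2*L)).1 := by
      rw [hP1 L hL h1, hP1 (2*L) (by omega) hQ2L]
    have g1 := (cf_inv_s7 D hirr hD1 L).2.2.1
    have g2 := (cf_inv_s7 D hirr hD1 (2*L)).2.2.1
    rw [h1, hPe] at g1
    rw [hQ2L] at g2
    have hae : cfAlpha (Real.sqrt D) L = cfAlpha (Real.sqrt D) (2*L) := by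
      push_cast at g1 g2; linarith
    have hae1 : cfAlpha (Real.sqrt D) (L+1) = cfAlpha (Real.sqrt D) 1 :=
      (cf_alpha_congr _ hae 1).trans hal
    have : L ∈ S := by
      refine ⟨hL, fun k hk => ?_⟩
      have := cf_alpha_congr _ hae1 (k - 1)
      rw [show L + 1 + (k - 1) = k + L by omega, show 1 + (k-1) = k by omega] at this
      simp only [cfA, this]
    have := hmin L this
    omega
  have hQ1 : 1 < (cfPQ D L).2 := by omega
  have hPpos : 0 < (cfPQ D L).1 := by nlinarith
  have hPsq : (cfPQ D L).1 ^ 2 < (D:ℤ) := by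
    have hss : Real.sqrt D * Real.sqrt D = D := Real.mul_self_sqrt (by positivity)
    have h0 : (0:ℝ) < (cfPQ D L).1 := by exact_mod_cast hPpos
    have : ((cfPQ D L).1:ℝ)^2 < D := by nlinarith
    exact_mod_cast this
  have hQ2 : (cfPQ D L).2 = 2 :=
    final_arith p D hp hD hns _ _ _ haL hQ1 hPsq haQ hdL
  have hPa : (cfPQ D L).1 = cfA (Real.sqrt D) L := by rw [hQ2] at haQ; linarith
  refine ⟨hQ2, hPa, ?_, ?_⟩
  · rw [← hPa]
    obtain ⟨m, rfl⟩ : ∃ m, L = m + 1 := ⟨L - 1, by omega⟩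
    have h1 := (hst m).2.2.2
    rw [hQ2] at h1
    have f1 := Int.floor_le (Real.sqrt D)
    have f2 : (cfPQ D (m+1)).1 ≤ ⌊Real.sqrt D⌋ := Int.le_floor.mpr hPL.le
    have f3 : ⌊Real.sqrt D⌋ - 2 < (cfPQ D (m+1)).1 := by
      have : ((⌊Real.sqrt D⌋ - 2 : ℤ) : ℝ) < (cfPQ D (m+1)).1 := by push_cast at h1 ⊢; linarith
      exact_mod_cast this
    omega
  · rw [hQ2, hPa] at hdL
    generalize cfA (Real.sqrt D) L = a at hdL
    have h2 : (2:ℤ) ∣ a * (a - 1) := (Int.even_mul_pred_self a).two_dvd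
    apply (Int.modEq_iff_dvd).mpr
    have h3 := dvd_add hdL h2
    have h4 : (D:ℤ) - a ^ 2 + a * (a - 1) = D - a := by ring
    rwa [h4] at h3
end
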